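/- arXiv:2003.03355 — 8 statements merged into one kernel-verified Lean document; each statement's English description precedes it below -/
import Mathlib

section
/- Let G and H be simple graphs on the same vertex set such that every edge of H joins two vertices that are reachable in G at dist_G at most 2. Then for all vertices u, v that are reachable in H, u and v are reachable in G and dist_H(u,v) ≥ ⌈dist_G(u,v)/2⌉. In other words, one round of edge modifications under the distance-2 activation rule can decrease any distance by at most a factor of 2. -/
/-!
Encode "reachable at distance at most `k`" as the single inequality `edist ≤ k`. A map sending
every edge of `H` to a pair of vertices at extended distance at most `k` in `G` stretches a walk
by a factor of at most `k`, by the triangle inequality for `edist`; apply this to a shortest walk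
of `H`.
-/

open SimpleGraph

section

variable {V W : Type*} {G : SimpleGraph W} {H : SimpleGraph V} {f : V → W} {u v : V}

theorem edist_le_natCast_iff {a b : W} {k : ℕ} :
    G.edist a b ≤ k ↔ G.Reachable a b ∧ G.dist a b ≤ k := by
  constructor
  · intro h
    have hab : G.Reachable a b := reachable_of_edist_ne_top (ne_top_of_le_ne_top (by simp) h)
    rw [← hab.coe_dist_eq_edist] at h
    exact ⟨hab, by exact_mod_cast h⟩
  · rintro ⟨hab, h⟩
    rw [← hab.coe_dist_eq_edist]
    exact_mod_cast h

theorem edist_map_le_mul_length {k : ℕ∞} (hf : ∀ u v, H.Adj u v → G.edist (f u) (f v) ≤ k)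
    (p : H.Walk u v) : G.edist (f u) (f v) ≤ k * p.length := by
  induction p with
  | nil => simp
  | @cons u w v huw p ih =>
    calc
      G.edist (f u) (f v) ≤ G.edist (f u) (f w) + G.edist (f w) (f v) := G.edist_triangle
      _ ≤ k + k * p.length := add_le_add (hf u w huw) ih
      _ = k * (p.cons huw).length := by
        rw [Walk.length_cons, Nat.cast_succ, mul_add, mul_one, add_comm]

theorem one_round_halves_distance_general {k : ℕ}
    (hf : ∀ u v, H.Adj u v → G.Reachable (f u) (f v) ∧ G.dist (f u) (f v) ≤ k)
    (h : H.Reachable u v) :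
    G.Reachable (f u) (f v) ∧ G.dist (f u) (f v) ≤ k * H.dist u v := by
  obtain ⟨p, hp⟩ := h.exists_walk_length_eq_dist
  rw [← edist_le_natCast_iff, ← hp, Nat.cast_mul]
  exact edist_map_le_mul_length (fun u v huv ↦ edist_le_natCast_iff.mpr (hf u v huv)) p

end

/-- If every edge of `H` joins two vertices that are reachable in `G` at `G`-distance at
most 2, then reachability in `H` implies reachability in `G`, and
`dist_H(u,v) ≥ ⌈dist_G(u,v)/2⌉` (the ceiling expressed as `(dist_G(u,v) + 1) / 2` in `ℕ`). -/
theorem one_round_halves_distance {V : Type*} [Fintype V] (G H : SimpleGraph V)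
    (hH : ∀ u v : V, H.Adj u v → G.Reachable u v ∧ G.dist u v ≤ 2)
    (u v : V) (h : H.Reachable u v) :
    G.Reachable u v ∧ (G.dist u v + 1) / 2 ≤ H.dist u v :=
  (one_round_halves_distance_general (f := id) hH h).imp_right fun hdist ↦ by
    simp only [id_eq] at hdist
    omega
end

section
/- Let G_0, G_1, …, G_T be an actively dynamic sequence of graphs. Then for all vertices u, v that are reachable in G_T, u and v are reachable in G_0 and 2^T · dist_{G_T}(u,v) ≥ dist_{G_0}(u,v). -/
/-- A sequence of simple graphs on a common vertex set is actively dynamic (up to time `T`)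
if, for every round `i < T`, every edge of `G (i+1)` that is not an edge of `G i` joins two
vertices that have a common neighbor in `G i`. -/
def ActivelyDynamic {V : Type*} (Gs : ℕ → SimpleGraph V) (T : ℕ) : Prop :=
  ∀ i < T, ∀ u v : V, (Gs (i + 1)).Adj u v → ¬ (Gs i).Adj u v →
    ∃ w : V, (Gs i).Adj u w ∧ (Gs i).Adj w v

/-!
Extended distances satisfy the triangle inequality, and the length of a walk counts its edges. So if
the endpoints of each edge of `H` lie within distance `k ≠ 0` in `G`, passing from `H` to `G`
multiplies distances by at most `k`. In one round of an actively dynamic sequence this factor is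
`2`, and the factors multiply over the rounds. Reachability means that the distance in `ℕ∞` is
finite, so the same bound transfers it from `G_T` to `G_0`.
-/

section EDist

variable {V : Type*} {k : ℕ∞}

theorem edist_le_mul_length_of_forall_adj {G H : SimpleGraph V}
    (hGH : ∀ x y, H.Adj x y → G.edist x y ≤ k) {u v : V} (p : H.Walk u v) :
    G.edist u v ≤ k * p.length := by
  induction p with
  | nil => simp
  | @cons x y z hxy p ih =>
    calc
      G.edist x z ≤ G.edist x y + G.edist y z := SimpleGraph.edist_triangle
      _ ≤ k + k * p.length := add_le_add (hGH x y hxy) ih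
      _ = k * (p.cons hxy).length := by
        rw [SimpleGraph.Walk.length_cons, Nat.cast_succ, mul_add_one, add_comm]

theorem edist_le_mul_edist_of_forall_adj {G H : SimpleGraph V} (hk : k ≠ 0)
    (hGH : ∀ x y, H.Adj x y → G.edist x y ≤ k) (u v : V) :
    G.edist u v ≤ k * H.edist u v :=
  calc
    G.edist u v ≤ ⨅ p : H.Walk u v, k * (p.length : ℕ∞) :=
      le_iInf (edist_le_mul_length_of_forall_adj hGH)
    _ = k * H.edist u v := (ENat.mul_iInf_of_ne hk).symm

theorem edist_le_pow_mul_edist_of_forall_adj_succ {Gs : ℕ → SimpleGraph V} {T : ℕ} (hk : k ≠ 0)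
    (hGs : ∀ i < T, ∀ x y, (Gs (i + 1)).Adj x y → (Gs i).edist x y ≤ k) (u v : V) :
    (Gs 0).edist u v ≤ k ^ T * (Gs T).edist u v := by
  induction T with
  | zero => simp
  | succ n ih =>
    calc
      (Gs 0).edist u v ≤ k ^ n * (Gs n).edist u v := ih fun i hi ↦ hGs i (hi.trans n.lt_succ_self)
      _ ≤ k ^ n * (k * (Gs (n + 1)).edist u v) := by
        gcongr
        exact edist_le_mul_edist_of_forall_adj hk (hGs n n.lt_succ_self) u v
      _ = k ^ (n + 1) * (Gs (n + 1)).edist u v := by rw [pow_succ, mul_assoc]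

end EDist

namespace ActivelyDynamic

variable {V : Type*} {Gs : ℕ → SimpleGraph V} {T : ℕ}

theorem edist_le_two_of_adj_succ (hdyn : ActivelyDynamic Gs T) {i : ℕ} (hi : i < T) {u v : V}
    (huv : (Gs (i + 1)).Adj u v) : (Gs i).edist u v ≤ 2 := by
  by_cases hold : (Gs i).Adj u v
  · exact (SimpleGraph.edist_eq_one_iff_adj.mpr hold).trans_le one_le_two
  · obtain ⟨w, huw, hwv⟩ := hdyn i hi u v huv hold
    exact (huw.toWalk.append hwv.toWalk).edist_le

theorem edist_le_two_pow_mul_edist (hdyn : ActivelyDynamic Gs T) (u v : V) :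
    (Gs 0).edist u v ≤ 2 ^ T * (Gs T).edist u v :=
  edist_le_pow_mul_edist_of_forall_adj_succ two_ne_zero
    (fun _ hi _ _ ↦ hdyn.edist_le_two_of_adj_succ hi) u v

end ActivelyDynamic

theorem activelyDynamic_dist_bound_general {V : Type*} (Gs : ℕ → SimpleGraph V)
    (T : ℕ) (hdyn : ActivelyDynamic Gs T) (u v : V) (h : (Gs T).Reachable u v) :
    (Gs 0).Reachable u v ∧ (Gs 0).dist u v ≤ 2 ^ T * (Gs T).dist u v := by
  have hbound : (Gs 0).edist u v ≤ (2 ^ T * (Gs T).dist u v : ℕ) := by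
    push_cast
    rw [h.coe_dist_eq_edist]
    exact hdyn.edist_le_two_pow_mul_edist u v
  have hreach : (Gs 0).Reachable u v :=
    SimpleGraph.reachable_of_edist_ne_top (ne_top_of_le_ne_top (ENat.natCast_ne_top _) hbound)
  rw [← hreach.coe_dist_eq_edist] at hbound
  exact ⟨hreach, Nat.cast_le.mp hbound⟩

/-- For an actively dynamic sequence `G_0, …, G_T`, if `u` and `v` are reachable in `G_T`
then they are reachable in `G_0` and `2^T · dist_{G_T}(u,v) ≥ dist_{G_0}(u,v)`. -/
theorem activelyDynamic_dist_bound {V : Type*} [Fintype V] (Gs : ℕ → SimpleGraph V)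
    (T : ℕ) (hdyn : ActivelyDynamic Gs T) (u v : V) (h : (Gs T).Reachable u v) :
    (Gs 0).Reachable u v ∧ (Gs 0).dist u v ≤ 2 ^ T * (Gs T).dist u v :=
  activelyDynamic_dist_bound_general Gs T hdyn u v h
end

section
/- Let G and H be simple graphs on the same vertex set such that every edge of H is either an edge of G or joins two vertices that have a common neighbor in G, and let k be the number of edges of H that are not edges of G. Then for all vertices u, v reachable in H, u and v are reachable in G and dist_H(u,v) ≥ dist_G(u,v) − k. In other words, each activated edge can decrease any distance by at most 1. -/
/-!
Replay a shortest `H`-walk in `G`: an edge of `G` is copied, an activated edge becomes a detour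
of length at most two. A shortest walk can be taken to be a path, so it uses each activated edge at
most once, and the detours cost at most one extra step for each of them.
-/

section

open SimpleGraph

variable {V : Type*} {G H : SimpleGraph V} {u v : V}

theorem edist_le_two_of_adj_of_adj {w : V} (huw : G.Adj u w) (hwv : G.Adj w v) :
    G.edist u v ≤ 2 :=
  edist_le (.cons huw (.cons hwv .nil))

theorem reachable_of_forall_adj_reachable (hH : ∀ a b, H.Adj a b → G.Reachable a b)
    (h : H.Reachable u v) : G.Reachable u v := by
  obtain ⟨p⟩ := h
  induction p with
  | nil => rfl
  | cons hab _ ih => exact (hH _ _ hab).trans ih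

theorem countP_edges_le_encard_edgeSet_inter {p : H.Walk u v} (hp : p.IsTrail)
    (s : Set (Sym2 V)) [DecidablePred (· ∈ s)] :
    (p.edges.countP (· ∈ s) : ℕ∞) ≤ (H.edgeSet ∩ s).encard := by
  classical
  have hnodup : (p.edges.filter (· ∈ s)).Nodup := hp.edges_nodup.filter _
  rw [List.countP_eq_length_filter, ← List.toFinset_card_of_nodup hnodup,
    ← Set.encard_coe_eq_coe_finsetCard]
  refine Set.encard_le_encard fun e he ↦ ?_
  simp only [List.coe_toFinset, Set.mem_ofPred_eq, List.mem_filter, decide_eq_true_eq] at he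
  exact ⟨p.edges_subset_edgeSet he.1, he.2⟩

theorem edist_le_length_add_mul_countP_edges [DecidablePred (· ∈ G.edgeSetᶜ)] {m : ℕ∞}
    (hH : ∀ a b, H.Adj a b → G.edist a b ≤ 1 + m) (p : H.Walk u v) :
    G.edist u v ≤ p.length + m * p.edges.countP (· ∈ G.edgeSetᶜ) := by
  induction p with
  | nil => simp
  | @cons a b c hab p ih =>
    have htri : G.edist a c ≤ G.edist a b + G.edist b c := G.edist_triangle
    by_cases hG : G.Adj a b
    · have hcount : (Walk.cons hab p).edges.countP (· ∈ G.edgeSetᶜ) =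
          p.edges.countP (· ∈ G.edgeSetᶜ) :=
        List.countP_cons_of_neg (by simp [hG])
      calc
        G.edist a c ≤ 1 + (p.length + m * p.edges.countP (· ∈ G.edgeSetᶜ)) :=
          htri.trans (add_le_add (edist_eq_one_iff_adj.mpr hG).le ih)
        _ = (Walk.cons hab p).length + m * (Walk.cons hab p).edges.countP (· ∈ G.edgeSetᶜ) := by
          rw [hcount, Walk.length_cons]
          push_cast
          ring
    · have hcount : (Walk.cons hab p).edges.countP (· ∈ G.edgeSetᶜ) =
          p.edges.countP (· ∈ G.edgeSetᶜ) + 1 :=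
        List.countP_cons_of_pos (by simp [hG])
      calc
        G.edist a c ≤ (1 + m) + (p.length + m * p.edges.countP (· ∈ G.edgeSetᶜ)) :=
          htri.trans (add_le_add (hH a b hab) ih)
        _ = (Walk.cons hab p).length + m * (Walk.cons hab p).edges.countP (· ∈ G.edgeSetᶜ) := by
          rw [hcount, Walk.length_cons]
          push_cast
          ring

theorem edist_le_edist_add_mul_encard_edgeSet_sdiff {m : ℕ∞}
    (hH : ∀ a b, H.Adj a b → G.edist a b ≤ 1 + m) (u v : V) :
    G.edist u v ≤ H.edist u v + m * (H.edgeSet \ G.edgeSet).encard := by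
  classical
  by_cases h : H.Reachable u v
  · obtain ⟨p, hp, hlen⟩ := h.exists_path_of_dist
    have hcount : (p.edges.countP (· ∈ G.edgeSetᶜ) : ℕ∞) ≤ (H.edgeSet \ G.edgeSet).encard :=
      countP_edges_le_encard_edgeSet_inter hp.isTrail _
    calc
      G.edist u v ≤ p.length + m * p.edges.countP (· ∈ G.edgeSetᶜ) :=
        edist_le_length_add_mul_countP_edges hH p
      _ = H.edist u v + m * p.edges.countP (· ∈ G.edgeSetᶜ) := by
        rw [hlen, h.coe_dist_eq_edist]
      _ ≤ H.edist u v + m * (H.edgeSet \ G.edgeSet).encard := by gcongr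
  · simp [edist_eq_top_of_not_reachable h]

end

theorem activated_edges_distance_bound_general {V : Type*} (G H : SimpleGraph V)
    (hH : ∀ u v : V, H.Adj u v → G.Adj u v ∨ ∃ w : V, G.Adj u w ∧ G.Adj w v)
    (u v : V) (h : H.Reachable u v) :
    G.Reachable u v ∧
      (G.dist u v : ℕ∞) ≤ H.dist u v + (H.edgeSet \ G.edgeSet).encard := by
  have hedge (a b : V) (hab : H.Adj a b) : G.edist a b ≤ 1 + 1 := by
    rw [one_add_one_eq_two]
    rcases hH a b hab with hG | ⟨w, haw, hwb⟩
    · exact (SimpleGraph.edist_eq_one_iff_adj.mpr hG).le.trans one_le_two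
    · exact edist_le_two_of_adj_of_adj haw hwb
  have hG : G.Reachable u v := reachable_of_forall_adj_reachable
    (fun a b hab ↦ SimpleGraph.reachable_of_edist_ne_top
      (ne_top_of_le_ne_top (by decide) (hedge a b hab))) h
  rw [hG.coe_dist_eq_edist, h.coe_dist_eq_edist]
  exact ⟨hG, by simpa only [one_mul] using edist_le_edist_add_mul_encard_edgeSet_sdiff hedge u v⟩

/-- If every edge of `H` is an edge of `G` or joins two vertices with a common neighbor in
`G`, and `k` is the number of edges of `H` not in `G`, then reachability in `H` implies
reachability in `G` and `dist_H(u,v) ≥ dist_G(u,v) - k`. -/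
theorem activated_edges_distance_bound {V : Type*} [Fintype V] (G H : SimpleGraph V)
    (hH : ∀ u v : V, H.Adj u v → G.Adj u v ∨ ∃ w : V, G.Adj u w ∧ G.Adj w v)
    (u v : V) (h : H.Reachable u v) :
    G.Reachable u v ∧
      (G.dist u v : ℤ) - ((H.edgeSet \ G.edgeSet).ncard : ℤ) ≤ (H.dist u v : ℤ) := by
  simpa only [← (Set.toFinite (H.edgeSet \ G.edgeSet)).cast_ncard_eq, sub_le_iff_le_add,
    ← Nat.cast_add, Nat.cast_le] using activated_edges_distance_bound_general G H hH u v h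
end

section
/- There exists a constant C such that for every connected simple graph G on n ≥ 2 vertices there is an actively dynamic sequence G_0 = G, G_1, …, G_T with T ≤ C·log₂ n, total edge activations Σ_{i<T} |E(G_{i+1}) \ E(G_i)| ≤ C·n, and such that G_T is a tree having a vertex r with dist_{G_T}(r, v) ≤ ⌈log₂ n⌉ for every vertex v. That is, the Depth-⌈log₂ n⌉ Tree problem can be solved by a centralized strategy in O(log n) rounds with Θ(n) total edge activations. -/
/-!
A connected graph on `n` vertices has a closed walk of length `2 * (n - 1)` through all its
vertices. Pointer doubling along this walk joins, in round `j`, the vertices at positions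
`k * 2 ^ j` and `(k + 1) * 2 ^ j`: the previous round has joined both of them to the vertex at the
midpoint `(2 * k + 1) * 2 ^ (j - 1)`. The number of these pairs is halved in every round, so there
are at most as many activations as the walk has steps. Afterwards position `m` is reached from
position `0` with one hop per binary digit `1` of `m`. There are at most `log₂ (m + 1)` of these,
and `m + 1 ≤ 2 * n - 1 < 2 ^ (⌈log₂ n⌉ + 1)`. A last round prunes the graph to a breadth-first
search tree, which activates no edge.
-/

open SimpleGraph

variable {V : Type*} {G : SimpleGraph V}

section ClosedWalk

theorem exists_walk_detour {a b u v : V} (p : G.Walk a b) (hu : u ∈ p.support) (huv : G.Adj u v) :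
    ∃ q : G.Walk a b, q.length = p.length + 2 ∧ ∀ x, x ∈ q.support ↔ x = v ∨ x ∈ p.support := by
  obtain ⟨p₁, p₂, rfl⟩ := Walk.mem_support_iff_exists_append.1 hu
  refine ⟨p₁.append (.cons huv (.cons huv.symm p₂)), ?_, fun x => ?_⟩
  · simp only [Walk.length_append, Walk.length_cons]
    ring
  · have hx : x = u → x ∈ p₂.support := fun h => h ▸ p₂.start_mem_support
    simp only [Walk.mem_support_append_iff, Walk.support_cons, List.mem_cons]
    tauto

theorem exists_adj_mem_notMem (hG : G.Preconnected) {s : Set V} (hs : s.Nonempty)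
    (hs' : s ≠ Set.univ) : ∃ u ∈ s, ∃ v ∉ s, G.Adj u v := by
  obtain ⟨a, ha⟩ := hs
  obtain ⟨b, hb⟩ := (Set.ne_univ_iff_exists_notMem s).1 hs'
  obtain ⟨p⟩ := hG a b
  obtain ⟨d, -, hd₁, hd₂⟩ := p.exists_boundary_dart s ha hb
  exact ⟨d.fst, hd₁, d.snd, hd₂, d.adj⟩

theorem exists_closed_walk_ncard_support_eq [Finite V] (hG : G.Connected) (r : V) {k : ℕ}
    (hk : k < Nat.card V) :
    ∃ p : G.Walk r r, p.length = 2 * k ∧ {v | v ∈ p.support}.ncard = k + 1 := by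
  induction k with
  | zero => exact ⟨.nil, rfl, by simp⟩
  | succ k ih =>
    obtain ⟨p, hp, hcard⟩ := ih (by omega)
    obtain ⟨u, hu, v, hv, huv⟩ := exists_adj_mem_notMem hG.preconnected ⟨r, p.start_mem_support⟩
      (show {v | v ∈ p.support} ≠ Set.univ by
        intro h
        rw [h, Set.ncard_univ] at hcard
        omega)
    obtain ⟨q, hq, hsupport⟩ := exists_walk_detour p hu huv
    refine ⟨q, by omega, ?_⟩
    calc {x | x ∈ q.support}.ncard = (insert v {x | x ∈ p.support}).ncard :=
          congrArg Set.ncard (Set.ext hsupport)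
      _ = k + 1 + 1 := by rw [Set.ncard_insert_of_notMem hv, hcard]

theorem exists_closed_walk_forall_mem_support [Finite V] (hG : G.Connected) (r : V) :
    ∃ p : G.Walk r r, p.length = 2 * (Nat.card V - 1) ∧ ∀ v, v ∈ p.support := by
  have : Nonempty V := ⟨r⟩
  have hpos : 0 < Nat.card V := Nat.card_pos
  obtain ⟨p, hp, hcard⟩ := exists_closed_walk_ncard_support_eq hG r (Nat.sub_one_lt_of_lt hpos)
  have huniv : {v | v ∈ p.support} = Set.univ := by
    rw [Set.eq_univ_iff_ncard, hcard]
    omega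
  exact ⟨p, hp, Set.eq_univ_iff_forall.1 huniv⟩

end ClosedWalk

section BreadthFirstSearch

/-- The graph joining every vertex other than the root `r` to its parent under `parent`. -/
def parentGraph (r : V) (parent : V → V) : SimpleGraph V :=
  fromEdgeSet ((fun v => s(parent v, v)) '' {r}ᶜ)

variable {r : V} {parent : V → V} {depth : V → ℕ}

theorem parentGraph_adj {u v : V} : (parentGraph r parent).Adj u v ↔
    u ≠ v ∧ (v ≠ r ∧ parent v = u ∨ u ≠ r ∧ parent u = v) := by
  simp only [parentGraph, fromEdgeSet_adj, Set.mem_image, Set.mem_compl_iff,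
    Set.mem_singleton_iff, Sym2.eq_iff]
  grind

theorem parentGraph_le (hparent : ∀ v ≠ r, G.Adj (parent v) v) : parentGraph r parent ≤ G := by
  intro u v huv
  obtain ⟨-, ⟨hv, rfl⟩ | ⟨hu, rfl⟩⟩ := parentGraph_adj.1 huv
  exacts [hparent v hv, (hparent u hu).symm]

theorem edist_parentGraph_le (hdepth : ∀ v ≠ r, depth (parent v) < depth v) (v : V) :
    (parentGraph r parent).edist r v ≤ depth v := by
  induction hd : depth v using Nat.strong_induction_on generalizing v with
  | _ d ih =>
    obtain rfl | hv := eq_or_ne v r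
    · simp
    have hadj : (parentGraph r parent).Adj (parent v) v :=
      parentGraph_adj.2 ⟨fun h => (hdepth v hv).ne (congrArg depth h), .inl ⟨hv, rfl⟩⟩
    calc (parentGraph r parent).edist r v
        ≤ (parentGraph r parent).edist r (parent v) + (parentGraph r parent).edist (parent v) v :=
          SimpleGraph.edist_triangle
      _ ≤ depth (parent v) + 1 := by
          rw [edist_eq_one_iff_adj.2 hadj]
          gcongr
          exact ih _ (hd ▸ hdepth v hv) _ rfl
      _ ≤ d := by exact_mod_cast hd ▸ hdepth v hv

theorem isAcyclic_parentGraph (hdepth : ∀ v ≠ r, depth (parent v) < depth v) :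
    (parentGraph r parent).IsAcyclic := by
  -- The two neighbors of a deepest vertex on a cycle would both be its parent.
  classical
  intro a c hc
  obtain ⟨v, hv, hmax⟩ := c.support.toFinset.exists_max_image depth ⟨a, by simp⟩
  simp only [List.mem_toFinset] at hv hmax
  have hc' := hc.rotate hv
  have eq_parent {u : V} (hu : u ∈ (c.rotate v hv).support) (huv : (parentGraph r parent).Adj u v) :
      u = parent v := by
    have hle : depth u ≤ depth v := hmax u ((c.mem_support_rotate_iff v hv).1 hu)
    obtain ⟨-, ⟨-, h⟩ | ⟨hur, rfl⟩⟩ := parentGraph_adj.1 huv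
    exacts [h.symm, absurd (hdepth u hur) hle.not_gt]
  apply hc'.snd_ne_penultimate
  calc (c.rotate v hv).snd
      = parent v :=
        eq_parent (Walk.getVert_mem_support _ _) (Walk.adj_snd hc'.not_nil).symm
    _ = (c.rotate v hv).penultimate :=
        (eq_parent (Walk.getVert_mem_support _ _) (Walk.adj_penultimate hc'.not_nil)).symm

theorem isTree_parentGraph (hdepth : ∀ v ≠ r, depth (parent v) < depth v) :
    (parentGraph r parent).IsTree where
  connected := connected_iff_exists_forall_reachable _ |>.2 ⟨r, fun v =>
    reachable_of_edist_ne_top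
      (ne_top_of_le_ne_top (ENat.natCast_ne_top _) (edist_parentGraph_le hdepth v))⟩
  isAcyclic := isAcyclic_parentGraph hdepth

theorem exists_adj_dist_lt_dist {v : V} (h : G.Reachable r v) (hv : v ≠ r) :
    ∃ u, G.Adj u v ∧ G.dist r u < G.dist r v := by
  obtain ⟨p, hp⟩ := h.exists_walk_length_eq_dist
  have hnil : ¬ p.Nil := fun h => hv h.eq.symm
  have hlength := Walk.length_dropLast_add_one hnil
  refine ⟨p.penultimate, p.adj_penultimate hnil, ?_⟩
  calc G.dist r p.penultimate ≤ p.dropLast.length := dist_le _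
    _ < G.dist r v := by omega

theorem exists_isTree_le_dist_eq (hG : G.Connected) (r : V) :
    ∃ T ≤ G, T.IsTree ∧ ∀ v, T.dist r v = G.dist r v := by
  have exists_parent (v : V) : ∃ u, v ≠ r → G.Adj u v ∧ G.dist r u < G.dist r v := by
    by_cases hv : v = r
    · exact ⟨v, fun h => absurd hv h⟩
    · obtain ⟨u, hu⟩ := exists_adj_dist_lt_dist (hG.preconnected r v) hv
      exact ⟨u, fun _ => hu⟩
  choose parent hparent using exists_parent
  have hle : parentGraph r parent ≤ G := parentGraph_le fun v hv => (hparent v hv).1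
  have hdepth : ∀ v ≠ r, G.dist r (parent v) < G.dist r v := fun v hv => (hparent v hv).2
  have hT := isTree_parentGraph hdepth
  refine ⟨parentGraph r parent, hle, hT, fun v => le_antisymm ?_ ?_⟩
  · exact ENat.toNat_le_of_le_natCast (edist_parentGraph_le hdepth v)
  · exact (hT.connected.preconnected r v).dist_anti hle

end BreadthFirstSearch

section ActivelyDynamic

variable {Gs : ℕ → SimpleGraph V} {T : ℕ}

/-- The number of edge activations in the first `T` rounds of a sequence of graphs. A round with
infinitely many activations counts as `0`. -/
noncomputable def totalActivations (Gs : ℕ → SimpleGraph V) (T : ℕ) : ℕ :=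
  ∑ i ∈ Finset.range T, ((Gs (i + 1)).edgeSet \ (Gs i).edgeSet).ncard

theorem activelyDynamic_of_edist_le_two
    (h : ∀ i < T, ∀ u v, (Gs (i + 1)).Adj u v → (Gs i).edist u v ≤ 2) : ActivelyDynamic Gs T := by
  intro i hi u v huv hnadj
  by_contra hcommon
  refine (h i hi u v huv).not_gt (two_lt_edist_iff.2 ⟨huv.ne, hnadj, ?_⟩)
  rw [Set.eq_empty_iff_forall_notMem]
  exact fun w hw => hcommon ⟨w, hw.1, hw.2.symm⟩

theorem ActivelyDynamic.update_succ (h : ActivelyDynamic Gs T) {H : SimpleGraph V}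
    (hH : H ≤ Gs T) : ActivelyDynamic (Function.update Gs (T + 1) H) (T + 1) := by
  intro i hi u v huv hnadj
  rw [Function.update_of_ne hi.ne] at hnadj ⊢
  obtain rfl | hiT := (Nat.lt_succ_iff.1 hi).eq_or_lt
  · rw [Function.update_self] at huv
    exact absurd (hH huv) hnadj
  · rw [Function.update_of_ne (by omega)] at huv
    exact h i hiT u v huv hnadj

theorem totalActivations_update_succ {H : SimpleGraph V} (hH : H ≤ Gs T) :
    totalActivations (Function.update Gs (T + 1) H) (T + 1) = totalActivations Gs T := by
  have hlast : H.edgeSet \ (Gs T).edgeSet = ∅ := Set.sdiff_eq_empty.2 (edgeSet_mono hH)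
  rw [totalActivations, Finset.sum_range_succ, Function.update_self,
    Function.update_of_ne (Nat.lt_succ_self T).ne, hlast, Set.ncard_empty, add_zero]
  refine Finset.sum_congr rfl fun i hi => ?_
  have hiT := Finset.mem_range.1 hi
  rw [Function.update_of_ne (by omega), Function.update_of_ne (by omega)]

end ActivelyDynamic

section PointerDoubling

variable {a b : V}

/-- The pairs of vertices at two consecutive multiples of `2 ^ j` along the walk `p`: the edges
that pointer doubling along `p` activates in round `j`. The pair is a loop if `p` visits the same
vertex at both positions. -/
def shortcuts (p : G.Walk a b) (j : ℕ) : Set (Sym2 V) :=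
  (fun k => s(p.getVert (k * 2 ^ j), p.getVert ((k + 1) * 2 ^ j))) '' Set.Iio (p.length / 2 ^ j)

/-- The graph reached from `G` after `i` rounds of pointer doubling along the walk `p`. No edge is
deactivated. -/
def pointerDoubling (p : G.Walk a b) : ℕ → SimpleGraph V
  | 0 => G
  | i + 1 => pointerDoubling p i ⊔ fromEdgeSet (shortcuts p (i + 1))

theorem pointerDoubling_mono (p : G.Walk a b) : Monotone (pointerDoubling p) :=
  monotone_nat_of_le_succ fun _ => le_sup_left

theorem ncard_shortcuts_le (p : G.Walk a b) (j : ℕ) : (shortcuts p j).ncard ≤ p.length / 2 ^ j :=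
  (Set.ncard_image_le (Set.finite_Iio _)).trans_eq (by simp)

theorem edgeSet_pointerDoubling_succ_sdiff_subset (p : G.Walk a b) (i : ℕ) :
    (pointerDoubling p (i + 1)).edgeSet \ (pointerDoubling p i).edgeSet ⊆ shortcuts p (i + 1) := by
  rw [pointerDoubling, edgeSet_sup, Set.union_sdiff_left, edgeSet_fromEdgeSet]
  exact Set.sdiff_subset.trans Set.sdiff_subset

theorem totalActivations_pointerDoubling_le (p : G.Walk a b) (T : ℕ) :
    totalActivations (pointerDoubling p) T ≤ p.length := by
  calc totalActivations (pointerDoubling p) T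
      ≤ ∑ i ∈ Finset.range T, p.length / 2 ^ (i + 1) := by
        refine Finset.sum_le_sum fun i _ => le_trans ?_ (ncard_shortcuts_le p (i + 1))
        exact Set.ncard_le_ncard (edgeSet_pointerDoubling_succ_sdiff_subset p i)
          ((Set.finite_Iio _).image _)
    _ = ∑ j ∈ Finset.Ico 1 (T + 1), p.length / 2 ^ j := by
        rw [Finset.sum_Ico_eq_sum_range]
        simp [add_comm]
    _ ≤ p.length := (Nat.geom_sum_Ico_le le_rfl _ _).trans_eq (Nat.div_one _)

theorem edist_pointerDoubling_shortcut_le_one (p : G.Walk a b) {i j k : ℕ} (hj : j ≤ i)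
    (hk : (k + 1) * 2 ^ j ≤ p.length) :
    (pointerDoubling p i).edist (p.getVert (k * 2 ^ j)) (p.getVert ((k + 1) * 2 ^ j)) ≤ 1 := by
  refine (edist_anti (pointerDoubling_mono p hj)).trans ?_
  rw [edist_le_one_iff_adj_or_eq, or_iff_not_imp_right]
  intro hne
  cases j with
  | zero =>
    simp only [pow_zero, mul_one] at hk ⊢
    exact p.adj_getVert_succ hk
  | succ j =>
    refine Or.inr ((fromEdgeSet_adj _).2 ⟨⟨k, ?_, rfl⟩, hne⟩)
    exact (Nat.le_div_iff_mul_le (by positivity)).2 hk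

theorem edist_pointerDoubling_le_two (p : G.Walk a b) {i : ℕ} {u v : V}
    (huv : s(u, v) ∈ shortcuts p (i + 1)) : (pointerDoubling p i).edist u v ≤ 2 := by
  obtain ⟨k, hk, heq⟩ := huv
  have hk' : (2 * k + 1 + 1) * 2 ^ i ≤ p.length := by
    have := (Nat.le_div_iff_mul_le (by positivity)).1 (Nat.succ_le_of_lt hk)
    rw [Nat.succ_eq_add_one, pow_succ] at this
    linarith
  have hdist : (pointerDoubling p i).edist (p.getVert (k * 2 ^ (i + 1)))
      (p.getVert ((k + 1) * 2 ^ (i + 1))) ≤ 2 := by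
    rw [show k * 2 ^ (i + 1) = 2 * k * 2 ^ i by ring,
      show (k + 1) * 2 ^ (i + 1) = (2 * k + 1 + 1) * 2 ^ i by ring, ← one_add_one_eq_two]
    refine SimpleGraph.edist_triangle.trans (add_le_add
      (edist_pointerDoubling_shortcut_le_one p le_rfl ?_)
      (edist_pointerDoubling_shortcut_le_one p le_rfl hk'))
    exact (Nat.mul_le_mul_right _ (by omega)).trans hk'
  obtain ⟨rfl, rfl⟩ | ⟨rfl, rfl⟩ := Sym2.eq_iff.1 heq
  · exact hdist
  · rwa [SimpleGraph.edist_comm]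

theorem activelyDynamic_pointerDoubling (p : G.Walk a b) (T : ℕ) :
    ActivelyDynamic (pointerDoubling p) T := by
  refine activelyDynamic_of_edist_le_two fun i _ u v huv => ?_
  obtain h | h := huv
  · exact (edist_eq_one_iff_adj.2 h).le.trans one_le_two
  · exact edist_pointerDoubling_le_two p ((fromEdgeSet_adj _).1 h).1

theorem edist_pointerDoubling_getVert_le (p : G.Walk a b) {i : ℕ} (hi : p.length < 2 ^ (i + 1))
    (m j : ℕ) (hm : m * 2 ^ j ≤ p.length) :
    (pointerDoubling p i).edist a (p.getVert (m * 2 ^ j)) ≤ Nat.log 2 (m + 1) := by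
  -- One hop per binary digit `1` of `m`: the induction removes the lowest digit, and `j` counts the
  -- digits removed so far.
  induction m using Nat.evenOddRec generalizing j with
  | h0 => simp
  | h_even m ih =>
    rw [show 2 * m * 2 ^ j = m * 2 ^ (j + 1) by ring] at hm ⊢
    exact (ih _ hm).trans (by exact_mod_cast Nat.log_mono_right (by omega))
  | h_odd m ih =>
    have hm' : m * 2 ^ (j + 1) ≤ p.length := by
      rw [show m * 2 ^ (j + 1) = 2 * m * 2 ^ j by ring]
      exact (Nat.mul_le_mul_right _ (by omega)).trans hm
    have hj : j ≤ i := by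
      refine Nat.lt_succ_iff.1 ((Nat.pow_lt_pow_iff_right one_lt_two).1 (lt_of_le_of_lt ?_ hi))
      exact le_trans (Nat.le_mul_of_pos_left _ (by omega)) hm
    calc (pointerDoubling p i).edist a (p.getVert ((2 * m + 1) * 2 ^ j))
        ≤ (pointerDoubling p i).edist a (p.getVert (2 * m * 2 ^ j)) +
            (pointerDoubling p i).edist (p.getVert (2 * m * 2 ^ j))
              (p.getVert ((2 * m + 1) * 2 ^ j)) := SimpleGraph.edist_triangle
      _ ≤ Nat.log 2 (m + 1) + 1 := by
          refine add_le_add ?_ (edist_pointerDoubling_shortcut_le_one p hj hm)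
          rw [show 2 * m * 2 ^ j = m * 2 ^ (j + 1) by ring]
          exact ih _ hm'
      _ = Nat.log 2 (2 * m + 1 + 1) := by
          rw [show 2 * m + 1 + 1 = (m + 1) * 2 by ring,
            Nat.log_mul_base one_lt_two m.succ_ne_zero, Nat.cast_add, Nat.cast_one]

theorem edist_pointerDoubling_le_log (p : G.Walk a b) {i : ℕ} (hi : p.length < 2 ^ (i + 1)) {v : V}
    (hv : v ∈ p.support) : (pointerDoubling p i).edist a v ≤ Nat.log 2 (p.length + 1) := by
  obtain ⟨m, rfl, hm⟩ := Walk.mem_support_iff_exists_getVert.1 hv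
  have h := edist_pointerDoubling_getVert_le p hi m 0 (by simpa using hm)
  rw [pow_zero, mul_one] at h
  exact h.trans (by exact_mod_cast Nat.log_mono_right (by omega))

end PointerDoubling

theorem centralized_depth_log_tree_general [Finite V] (hG : G.Connected) (r : V) :
    ∃ Gs : ℕ → SimpleGraph V,
      Gs 0 = G ∧ ActivelyDynamic Gs (Nat.clog 2 (Nat.card V) + 1) ∧
      totalActivations Gs (Nat.clog 2 (Nat.card V) + 1) ≤ 2 * (Nat.card V - 1) ∧
      (Gs (Nat.clog 2 (Nat.card V) + 1)).IsTree ∧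
      ∀ v, (Gs (Nat.clog 2 (Nat.card V) + 1)).dist r v ≤ Nat.clog 2 (Nat.card V) := by
  set L := Nat.clog 2 (Nat.card V)
  obtain ⟨p, hlength, hcover⟩ := exists_closed_walk_forall_mem_support hG r
  have hlt : p.length + 1 < 2 ^ (L + 1) := by
    have hcard : Nat.card V ≤ 2 ^ L := Nat.le_pow_clog one_lt_two _
    have hpos : 0 < 2 ^ L := by positivity
    rw [pow_succ]
    omega
  have hconn : (pointerDoubling p L).Connected := hG.mono (pointerDoubling_mono p L.zero_le)
  obtain ⟨H, hle, htree, hdist⟩ := exists_isTree_le_dist_eq hconn r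
  refine ⟨Function.update (pointerDoubling p) (L + 1) H, rfl,
    (activelyDynamic_pointerDoubling p L).update_succ hle, ?_, ?_, fun v => ?_⟩
  · rw [totalActivations_update_succ hle, ← hlength]
    exact totalActivations_pointerDoubling_le p L
  · rwa [Function.update_self]
  · rw [Function.update_self, hdist]
    have hlog : Nat.log 2 (p.length + 1) ≤ L :=
      Nat.lt_succ_iff.1 (Nat.log_lt_of_lt_pow p.length.succ_ne_zero hlt)
    exact (ENat.toNat_le_of_le_natCast (edist_pointerDoubling_le_log p (by omega) (hcover v))).trans
      hlog

/-- There is a constant `C` such that every connected graph on `n ≥ 2` vertices admits an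
actively dynamic sequence of length `T ≤ C·⌈log₂ n⌉` with at most `C·n` total edge
activations ending in a tree of depth at most `⌈log₂ n⌉` from some root `r`:
the centralized Depth-`⌈log₂ n⌉` Tree strategy with `O(log n)` rounds and `Θ(n)` total
edge activations. -/
theorem centralized_depth_log_tree :
    ∃ C : ℕ, ∀ n : ℕ, 2 ≤ n → ∀ G : SimpleGraph (Fin n), G.Connected →
      ∃ T : ℕ, ∃ Gs : ℕ → SimpleGraph (Fin n),
        Gs 0 = G ∧ ActivelyDynamic Gs T ∧
        T ≤ C * Nat.clog 2 n ∧
        (∑ i ∈ Finset.range T, ((Gs (i + 1)).edgeSet \ (Gs i).edgeSet).ncard) ≤ C * n ∧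
        (Gs T).IsTree ∧
        ∃ r : Fin n, ∀ v : Fin n, (Gs T).dist r v ≤ Nat.clog 2 n := by
  refine ⟨2, fun n hn G hG => ?_⟩
  have h_rounds := Nat.clog_pos one_lt_two hn
  obtain ⟨Gs, h_start, h_dyn, h_activations, h_tree, h_depth⟩ :=
    Nat.card_fin n ▸ centralized_depth_log_tree_general hG ⟨0, by omega⟩
  exact ⟨_, Gs, h_start, h_dyn, by omega, h_activations.trans (by omega), h_tree, _, h_depth⟩
end

section
/- Fix n ≥ 2 and consider the CutInHalf graphs H_0, H_1, …, H_r. For every i with 1 ≤ i ≤ r and every a ≥ 0 with (a+1)·2^i ≤ n−1, the vertex a·2^i + 2^{i−1} is adjacent in H_{i−1} to both a·2^i and (a+1)·2^i. Consequently H_0, H_1, …, H_r is an actively dynamic sequence: every edge of H_i not in H_{i−1} joins two vertices with a common neighbor in H_{i−1}. -/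
/-- The CutInHalf graph `H_r` on `{0, …, n-1}`: the path edges `{j, j+1}` together with
the edges `{a·2^i, (a+1)·2^i}` for all `1 ≤ i ≤ r` and `a` with `(a+1)·2^i ≤ n-1`. -/
def cutInHalf (n r : ℕ) : SimpleGraph (Fin n) :=
  SimpleGraph.fromRel (fun u v =>
    u.val + 1 = v.val ∨
    ∃ i a : ℕ, 1 ≤ i ∧ i ≤ r ∧ (a + 1) * 2 ^ i ≤ n - 1 ∧
      u.val = a * 2 ^ i ∧ v.val = (a + 1) * 2 ^ i)

/-! Up to orientation, the edges of `H_r` are the pairs of consecutive multiples of `2 ^ i` with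
`i ≤ r`; the path edges are the case `i = 0`. An edge that first appears in round `k + 1` is a pair
of consecutive multiples of `2 ^ (k + 1)`, and its midpoint is a multiple of `2 ^ k` consecutive to
both of its ends. -/

theorem cutInHalf_adj_iff {n r : ℕ} {u v : Fin n} :
    (cutInHalf n r).Adj u v ↔
      ∃ i ≤ r, ∃ a : ℕ, s(u.val, v.val) = s(a * 2 ^ i, (a + 1) * 2 ^ i) := by
  simp only [cutInHalf, SimpleGraph.fromRel_adj, Sym2.eq_iff]
  constructor
  · rintro ⟨-, (h | ⟨i, a, -, hir, -, hu, hv⟩) | h | ⟨i, a, -, hir, -, hv, hu⟩⟩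
    · exact ⟨0, r.zero_le, u, by omega⟩
    · exact ⟨i, hir, a, .inl ⟨hu, hv⟩⟩
    · exact ⟨0, r.zero_le, v, by omega⟩
    · exact ⟨i, hir, a, .inr ⟨hu, hv⟩⟩
  · rintro ⟨i, hir, a, h⟩
    have hlt : a * 2 ^ i < (a + 1) * 2 ^ i :=
      Nat.mul_lt_mul_of_pos_right a.lt_succ_self (by positivity)
    refine ⟨fun huv => by omega, ?_⟩
    rcases i.eq_zero_or_pos with rfl | hi
    · omega
    · exact h.imp (fun ⟨hu, hv⟩ => .inr ⟨i, a, hi, hir, by omega, hu, hv⟩)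
        (fun ⟨hu, hv⟩ => .inr ⟨i, a, hi, hir, by omega, hv, hu⟩)

theorem cutInHalf_succ_adj_iff {n k : ℕ} {u v : Fin n} :
    (cutInHalf n (k + 1)).Adj u v ↔ (cutInHalf n k).Adj u v ∨
      ∃ a : ℕ, s(u.val, v.val) = s(a * 2 ^ (k + 1), (a + 1) * 2 ^ (k + 1)) := by
  simp only [cutInHalf_adj_iff, Nat.le_add_one_iff, or_and_right, exists_or, exists_eq_left]

theorem cutInHalf_adj_midpoint {n k a : ℕ} {u v m : Fin n}
    (huv : s(u.val, v.val) = s(a * 2 ^ (k + 1), (a + 1) * 2 ^ (k + 1)))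
    (hm : m.val = a * 2 ^ (k + 1) + 2 ^ k) :
    (cutInHalf n k).Adj m u ∧ (cutInHalf n k).Adj m v := by
  have adj_left {x : Fin n} (hx : x.val = a * 2 ^ (k + 1)) : (cutInHalf n k).Adj m x :=
    cutInHalf_adj_iff.2 ⟨k, le_rfl, 2 * a, Sym2.eq_iff.2 <| .inr
      ⟨by rw [hm]; ring, by rw [hx]; ring⟩⟩
  have adj_right {x : Fin n} (hx : x.val = (a + 1) * 2 ^ (k + 1)) : (cutInHalf n k).Adj m x :=
    cutInHalf_adj_iff.2 ⟨k, le_rfl, 2 * a + 1, Sym2.eq_iff.2 <| .inl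
      ⟨by rw [hm]; ring, by rw [hx]; ring⟩⟩
  rcases Sym2.eq_iff.1 huv with ⟨hu, hv⟩ | ⟨hu, hv⟩
  · exact ⟨adj_left hu, adj_right hv⟩
  · exact ⟨adj_right hu, adj_left hv⟩

theorem dyadic_midpoint_lt (a k : ℕ) : a * 2 ^ (k + 1) + 2 ^ k < (a + 1) * 2 ^ (k + 1) := by
  rw [add_one_mul]
  gcongr <;> simp

/-- For every `1 ≤ i ≤ r` and `a` with `(a+1)·2^i ≤ n-1`, the vertex `a·2^i + 2^(i-1)` is
adjacent in `H_(i-1)` to both `a·2^i` and `(a+1)·2^i`; consequently `H_0, …, H_r` is an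
actively dynamic sequence. -/
theorem cutInHalf_activelyDynamic (n r : ℕ) (hn : 2 ≤ n) :
    (∀ i a : ℕ, ∀ u v w : Fin n, 1 ≤ i → i ≤ r → (a + 1) * 2 ^ i ≤ n - 1 →
      u.val = a * 2 ^ i → v.val = a * 2 ^ i + 2 ^ (i - 1) → w.val = (a + 1) * 2 ^ i →
      (cutInHalf n (i - 1)).Adj v u ∧ (cutInHalf n (i - 1)).Adj v w) ∧
    ActivelyDynamic (cutInHalf n) r := by
  constructor
  · intro i a u v w hi _ _ hu hv hw
    obtain ⟨k, rfl⟩ := Nat.exists_eq_add_of_le' hi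
    exact cutInHalf_adj_midpoint (Sym2.eq_iff.2 <| .inl ⟨hu, hw⟩) hv
  · intro k _ u v hnew hold
    obtain ⟨a, huv⟩ := (cutInHalf_succ_adj_iff.1 hnew).resolve_left hold
    have right_lt : (a + 1) * 2 ^ (k + 1) < n := by
      have := Sym2.eq_iff.1 huv
      omega
    let m : Fin n := ⟨a * 2 ^ (k + 1) + 2 ^ k, (dyadic_midpoint_lt a k).trans right_lt⟩
    obtain ⟨hmu, hmv⟩ := cutInHalf_adj_midpoint (m := m) huv rfl
    exact ⟨m, hmu.symm, hmv⟩
end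

section
/- Fix n ≥ 2 and r ≥ 0, and consider the CutInHalf graph H_r. For every vertex j ∈ {0,…,n−1}, dist_{H_r}(j, 2^r·⌊j/2^r⌋) ≤ r. Consequently, for r = ⌈log₂(n−1)⌉, the diameter of H_r is at most 2r + 1, i.e., O(log n). -/
namespace cutInHalf

variable {n r s : ℕ}

theorem adj_of_consecutive_multiples (hs : s ≤ r) {a : ℕ} {u v : Fin n}
    (hu : u.val = 2 ^ s * a) (hv : v.val = 2 ^ s * (a + 1)) : (cutInHalf n r).Adj u v := by
  have hlt : u < v := by
    rw [Fin.lt_def, hu, hv]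
    gcongr
    exact a.lt_succ_self
  refine (SimpleGraph.fromRel_adj ..).mpr ⟨hlt.ne, Or.inl ?_⟩
  rcases s.eq_zero_or_pos with rfl | hs_pos
  · left
    rw [hu, hv, pow_zero, one_mul, one_mul]
  · rw [mul_comm] at hu hv
    exact Or.inr ⟨s, a, hs_pos, hs, hv ▸ Nat.le_sub_one_of_lt v.isLt, hu, hv⟩

theorem edist_multiples_le (hs : s ≤ r) {a k : ℕ} {u v : Fin n}
    (hu : u.val = 2 ^ s * a) (hv : v.val = 2 ^ s * (a + k)) :
    (cutInHalf n r).edist u v ≤ k := by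
  induction k generalizing v with
  | zero =>
    obtain rfl : u = v := Fin.ext (hu.trans hv.symm)
    simp
  | succ k ih =>
    let w : Fin n := ⟨2 ^ s * (a + k), lt_of_le_of_lt (by rw [hv]; gcongr; omega) v.isLt⟩
    have hwv : (cutInHalf n r).Adj w v := adj_of_consecutive_multiples hs rfl hv
    calc (cutInHalf n r).edist u v
        ≤ (cutInHalf n r).edist u w + (cutInHalf n r).edist w v := SimpleGraph.edist_triangle
      _ ≤ k + 1 := add_le_add (ih rfl) (SimpleGraph.edist_eq_one_iff_adj.mpr hwv).le
      _ = ↑(k + 1) := (Nat.cast_succ k).symm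

/-- The vertex `j` rounded down to a multiple of `2 ^ s`, that is `2 ^ s * ⌊j / 2 ^ s⌋`: the
landmark near `j` through which short walks from `j` are routed. -/
def roundDown (s : ℕ) (j : Fin n) : Fin n :=
  ⟨2 ^ s * (j.val / 2 ^ s), (Nat.mul_div_le _ _).trans_lt j.isLt⟩

theorem edist_roundDown_succ_le_one (hs : s ≤ r) (j : Fin n) :
    (cutInHalf n r).edist (roundDown (s + 1) j) (roundDown s j) ≤ 1 := by
  let q := j.val / 2 ^ s
  have h_succ : (roundDown (s + 1) j).val = 2 ^ s * (2 * (q / 2)) := calc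
    (roundDown (s + 1) j).val = 2 ^ (s + 1) * (j.val / 2 ^ (s + 1)) := rfl
    _ = 2 ^ s * (2 * (q / 2)) := by rw [pow_succ, ← Nat.div_div_eq_div_mul, mul_assoc]
  have h_digit : (roundDown s j).val = 2 ^ s * (2 * (q / 2) + q % 2) := by
    rw [Nat.div_add_mod, roundDown]
  calc (cutInHalf n r).edist (roundDown (s + 1) j) (roundDown s j)
      ≤ ↑(q % 2) := edist_multiples_le hs h_succ h_digit
    _ ≤ 1 := mod_cast Nat.le_of_lt_succ (q.mod_lt two_pos)

theorem edist_roundDown_le (hs : s ≤ r) (j : Fin n) :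
    (cutInHalf n r).edist j (roundDown s j) ≤ s := by
  induction s with
  | zero =>
    have h_zero : roundDown 0 j = j := Fin.ext (by simp [roundDown])
    simp [h_zero]
  | succ s ih =>
    have hs' : s ≤ r := Nat.le_of_succ_le hs
    calc (cutInHalf n r).edist j (roundDown (s + 1) j)
        ≤ (cutInHalf n r).edist j (roundDown s j)
          + (cutInHalf n r).edist (roundDown s j) (roundDown (s + 1) j) :=
        SimpleGraph.edist_triangle
      _ ≤ s + 1 :=
        add_le_add (ih hs') (SimpleGraph.edist_comm.trans_le (edist_roundDown_succ_le_one hs' j))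
      _ = ↑(s + 1) := (Nat.cast_succ s).symm

theorem edist_roundDown_roundDown_le (hs : s ≤ r) (u v : Fin n) :
    (cutInHalf n r).edist (roundDown s u) (roundDown s v) ≤ ↑((n - 1) / 2 ^ s) := by
  wlog huv : u ≤ v generalizing u v
  · exact SimpleGraph.edist_comm.trans_le (this v u (le_of_not_ge huv))
  have hq : u.val / 2 ^ s ≤ v.val / 2 ^ s := Nat.div_le_div_right huv
  have hv : (roundDown s v).val
      = 2 ^ s * (u.val / 2 ^ s + (v.val / 2 ^ s - u.val / 2 ^ s)) := by
    rw [Nat.add_sub_cancel' hq, roundDown]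
  calc (cutInHalf n r).edist (roundDown s u) (roundDown s v)
      ≤ ↑(v.val / 2 ^ s - u.val / 2 ^ s) := edist_multiples_le hs rfl hv
    _ ≤ ↑((n - 1) / 2 ^ s) := mod_cast
      (Nat.sub_le _ _).trans (Nat.div_le_div_right (Nat.le_sub_one_of_lt v.isLt))

theorem ediam_le (hs : s ≤ r) :
    (cutInHalf n r).ediam ≤ ↑(2 * s + (n - 1) / 2 ^ s) := by
  refine SimpleGraph.ediam_le_of_edist_le fun u v => ?_
  calc (cutInHalf n r).edist u v
      ≤ (cutInHalf n r).edist u (roundDown s u)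
        + (cutInHalf n r).edist (roundDown s u) (roundDown s v)
        + (cutInHalf n r).edist (roundDown s v) v :=
      SimpleGraph.edist_triangle.trans (add_le_add_left SimpleGraph.edist_triangle _)
    _ ≤ s + ↑((n - 1) / 2 ^ s) + s :=
      add_le_add (add_le_add (edist_roundDown_le hs u) (edist_roundDown_roundDown_le hs u v))
        (SimpleGraph.edist_comm.trans_le (edist_roundDown_le hs v))
    _ = ↑(2 * s + (n - 1) / 2 ^ s) := by
      push_cast
      ring

end cutInHalf

/-- In the CutInHalf graph `H_r`, every vertex `j` is within distance `r` of
`2^r·⌊j/2^r⌋`; consequently for `r = ⌈log₂(n-1)⌉` the diameter of `H_r` is at most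
`2r + 1`, i.e. `O(log n)`. -/
theorem cutInHalf_diameter (n : ℕ) (hn : 2 ≤ n) :
    (∀ r : ℕ, ∀ j : Fin n,
      (cutInHalf n r).dist j
        ⟨2 ^ r * (j.val / 2 ^ r),
          lt_of_le_of_lt (by rw [mul_comm]; exact Nat.div_mul_le_self _ _) j.isLt⟩ ≤ r) ∧
    (∀ u v : Fin n, (cutInHalf n (Nat.clog 2 (n - 1))).dist u v
      ≤ 2 * Nat.clog 2 (n - 1) + 1) := by
  refine ⟨fun r j => ENat.toNat_le_of_le_natCast (cutInHalf.edist_roundDown_le le_rfl j),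
    fun u v => ENat.toNat_le_of_le_natCast ?_⟩
  have h_quot : (n - 1) / 2 ^ Nat.clog 2 (n - 1) ≤ 1 :=
    Nat.div_le_of_le_mul ((Nat.le_pow_clog one_lt_two _).trans_eq (mul_one _).symm)
  calc (cutInHalf n (Nat.clog 2 (n - 1))).edist u v
      ≤ (cutInHalf n (Nat.clog 2 (n - 1))).ediam := SimpleGraph.edist_le_ediam
    _ ≤ ↑(2 * Nat.clog 2 (n - 1) + (n - 1) / 2 ^ Nat.clog 2 (n - 1)) :=
      cutInHalf.ediam_le le_rfl
    _ ≤ ↑(2 * Nat.clog 2 (n - 1) + 1) := mod_cast Nat.add_le_add_left h_quot _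
end

section
/- Fix n ≥ 2 and r ≥ 0, and consider the CutInHalf graph H_r. The number of edges of H_r that are not path edges equals Σ_{i=1}^{r} ⌊(n−1)/2^i⌋, which is at most n − 1. Hence the CutInHalf construction uses at most n − 1 edge activations in total. -/
/-- The path graph `P_n` on vertices `{0, …, n-1}` with edges `{j, j+1}`. -/
def pathGraph' (n : ℕ) : SimpleGraph (Fin n) :=
  SimpleGraph.fromRel (fun u v => u.val + 1 = v.val)

/-! The edges of `H_r` are the pairs of endpoints of the dyadic intervals `[a·2^i, (a+1)·2^i]`
with `i ≤ r` contained in `[0, n-1]`, the path edges being those of scale `i = 0`. The length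
`2^i` of such an interval determines its scale, so edges of different scales are distinct;
there are `⌊(n-1)/2^i⌋` of scale `i`, and the sum over `i ≥ 1` is dominated by a geometric
series. -/

/-- The pair of endpoints of the `a`-th dyadic interval of scale `i`. It is taken in `ℕ` rather
than in `Fin n`, so that no bound on `a` is needed; edges are compared with it through
`Sym2.map Fin.val`. -/
def dyadicEdge (i a : ℕ) : Sym2 ℕ :=
  s(a * 2 ^ i, (a + 1) * 2 ^ i)

theorem dyadicEdge_inj {i j a b : ℕ} : dyadicEdge i a = dyadicEdge j b ↔ i = j ∧ a = b := by
  refine ⟨fun h ↦ ?_, by rintro ⟨rfl, rfl⟩; rfl⟩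
  have hi : 0 < 2 ^ i := by positivity
  have hj : 0 < 2 ^ j := by positivity
  simp only [dyadicEdge, add_one_mul, Sym2.eq_iff] at h
  have same_start : a * 2 ^ i = b * 2 ^ j := by omega
  have same_length : 2 ^ i = 2 ^ j := by omega
  obtain rfl : i = j := Nat.pow_right_injective le_rfl same_length
  exact ⟨rfl, Nat.eq_of_mul_eq_mul_right hi same_start⟩

theorem not_isDiag_dyadicEdge (i a : ℕ) : ¬(dyadicEdge i a).IsDiag := by
  simp [dyadicEdge]

section EdgeSets

variable {n r : ℕ}

theorem dyadicEdge_eq_map_val_iff {i a : ℕ} {u v : Fin n} :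
    dyadicEdge i a = s(u, v).map Fin.val ↔
      (u.val = a * 2 ^ i ∧ v.val = (a + 1) * 2 ^ i) ∨
        (v.val = a * 2 ^ i ∧ u.val = (a + 1) * 2 ^ i) := by
  simp only [dyadicEdge, Sym2.map_mk, Sym2.eq_iff]
  omega

theorem dyadicEdge_mem_range_map_val {i a : ℕ} :
    dyadicEdge i a ∈ Set.range (Sym2.map (Fin.val : Fin n → ℕ)) ↔ a < (n - 1) / 2 ^ i := by
  have hpos : 0 < 2 ^ i := by positivity
  have hlt : a * 2 ^ i < (a + 1) * 2 ^ i := Nat.mul_lt_mul_of_pos_right a.lt_add_one hpos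
  rw [← Nat.add_one_le_iff, Nat.le_div_iff_mul_le hpos]
  constructor
  · rintro ⟨⟨u, v⟩, h⟩
    have endpoints := dyadicEdge_eq_map_val_iff.1 h.symm
    omega
  · intro h
    exact ⟨s(⟨a * 2 ^ i, by omega⟩, ⟨(a + 1) * 2 ^ i, by omega⟩), rfl⟩

theorem cutInHalf_zero : cutInHalf n 0 = pathGraph' n := by
  ext u v
  simp only [cutInHalf, pathGraph', SimpleGraph.fromRel_adj]
  grind

theorem cutInHalf_rel_iff {u v : Fin n} :
    (u.val + 1 = v.val ∨ ∃ i a : ℕ, 1 ≤ i ∧ i ≤ r ∧ (a + 1) * 2 ^ i ≤ n - 1 ∧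
      u.val = a * 2 ^ i ∧ v.val = (a + 1) * 2 ^ i) ↔
      ∃ i ≤ r, ∃ a, u.val = a * 2 ^ i ∧ v.val = (a + 1) * 2 ^ i := by
  constructor
  · rintro (h | ⟨i, a, -, hir, -, hu, hv⟩)
    · exact ⟨0, r.zero_le, u, by simp [h]⟩
    · exact ⟨i, hir, a, hu, hv⟩
  · rintro ⟨i, hir, a, hu, hv⟩
    rcases i.eq_zero_or_pos with rfl | hi
    · exact Or.inl (by omega)
    · exact Or.inr ⟨i, a, hi, hir, by omega, hu, hv⟩

theorem mem_edgeSet_cutInHalf {e : Sym2 (Fin n)} :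
    e ∈ (cutInHalf n r).edgeSet ↔ ∃ i ≤ r, ∃ a, dyadicEdge i a = e.map Fin.val := by
  induction e with | _ u v
  have ne_of_eq : ∀ i a, dyadicEdge i a = s(u, v).map Fin.val → u ≠ v := by
    rintro i a h rfl
    exact not_isDiag_dyadicEdge i a (h ▸ Sym2.mk_isDiag_iff.2 rfl)
  simp only [SimpleGraph.mem_edgeSet, cutInHalf, SimpleGraph.fromRel_adj, cutInHalf_rel_iff,
    ← exists_or, ← and_or_left, ← dyadicEdge_eq_map_val_iff]
  exact and_iff_right_of_imp fun ⟨i, _, a, h⟩ ↦ ne_of_eq i a h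

theorem mem_edgeSet_pathGraph' {e : Sym2 (Fin n)} :
    e ∈ (pathGraph' n).edgeSet ↔ ∃ a, dyadicEdge 0 a = e.map Fin.val := by
  simp only [← cutInHalf_zero, mem_edgeSet_cutInHalf, Nat.le_zero, exists_eq_left]

theorem mem_edgeSet_cutInHalf_diff_pathGraph' {e : Sym2 (Fin n)} :
    e ∈ (cutInHalf n r).edgeSet \ (pathGraph' n).edgeSet ↔
      ∃ i ∈ Finset.Icc 1 r, ∃ a, dyadicEdge i a = e.map Fin.val := by
  simp only [Set.mem_sdiff, mem_edgeSet_cutInHalf, mem_edgeSet_pathGraph', Finset.mem_Icc]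
  constructor
  · rintro ⟨⟨i, hir, a, h⟩, hpath⟩
    refine ⟨i, ⟨Nat.one_le_iff_ne_zero.2 ?_, hir⟩, a, h⟩
    rintro rfl
    exact hpath ⟨a, h⟩
  · rintro ⟨i, ⟨hi, hir⟩, a, h⟩
    refine ⟨⟨i, hir, a, h⟩, fun ⟨b, hb⟩ ↦ ?_⟩
    have same_scale : i = 0 := (dyadicEdge_inj.1 (h.trans hb.symm)).1
    omega

theorem image_map_val_edgeSet_cutInHalf_diff_pathGraph' :
    Sym2.map Fin.val '' ((cutInHalf n r).edgeSet \ (pathGraph' n).edgeSet) =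
      (fun p : (_ : ℕ) × ℕ ↦ dyadicEdge p.1 p.2) ''
        ((Finset.Icc 1 r).sigma fun i ↦ Finset.range ((n - 1) / 2 ^ i)) := by
  ext e
  simp only [Set.mem_image, mem_edgeSet_cutInHalf_diff_pathGraph', Finset.mem_coe,
    Finset.mem_sigma, Finset.mem_range, ← dyadicEdge_mem_range_map_val]
  constructor
  · rintro ⟨e, ⟨i, hi, a, h⟩, rfl⟩
    exact ⟨⟨i, a⟩, ⟨hi, e, h.symm⟩, h⟩
  · rintro ⟨⟨i, a⟩, ⟨hi, e, h⟩, rfl⟩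
    exact ⟨e, ⟨i, hi, a, h.symm⟩, h⟩

end EdgeSets

theorem ncard_edgeSet_cutInHalf_diff_pathGraph' (n r : ℕ) :
    ((cutInHalf n r).edgeSet \ (pathGraph' n).edgeSet).ncard =
      ∑ i ∈ Finset.Icc 1 r, (n - 1) / 2 ^ i := by
  have hinj : Function.Injective fun p : (_ : ℕ) × ℕ ↦ dyadicEdge p.1 p.2 := by
    rintro ⟨i, a⟩ ⟨j, b⟩ h
    obtain ⟨rfl, rfl⟩ := dyadicEdge_inj.1 h
    rfl
  rw [← Set.ncard_image_of_injective _ (Sym2.map.injective Fin.val_injective),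
    image_map_val_edgeSet_cutInHalf_diff_pathGraph', Set.ncard_image_of_injective _ hinj,
    Set.ncard_coe_finset, Finset.card_sigma]
  simp only [Finset.card_range]

/-- The number of non-path edges of the CutInHalf graph `H_r` equals
`Σ_{i=1}^{r} ⌊(n-1)/2^i⌋`, which is at most `n - 1`; hence the CutInHalf construction
uses at most `n - 1` edge activations in total. -/
theorem cutInHalf_edge_activations (n r : ℕ) (hn : 2 ≤ n) :
    ((cutInHalf n r).edgeSet \ (pathGraph' n).edgeSet).ncard
        = ∑ i ∈ Finset.Icc 1 r, (n - 1) / 2 ^ i ∧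
      (∑ i ∈ Finset.Icc 1 r, (n - 1) / 2 ^ i) ≤ n - 1 := by
  refine ⟨ncard_edgeSet_cutInHalf_diff_pathGraph' n r, ?_⟩
  calc ∑ i ∈ Finset.Icc 1 r, (n - 1) / 2 ^ i
      = ∑ i ∈ Finset.Ico 1 (r + 1), (n - 1) / 2 ^ i := by rw [Finset.Ico_add_one_right_eq_Icc]
    _ ≤ (n - 1) / (2 - 1) := Nat.geom_sum_Ico_le le_rfl (n - 1) (r + 1)
    _ = n - 1 := Nat.div_one (n - 1)
end

section
/- Let T be a tree on n ≥ 2 vertices rooted at a vertex u_0 of depth d ≥ 1 (every vertex is at distance at most d from u_0 in T). Then there exists an actively dynamic sequence G_0 = T, G_1, …, G_k with k = ⌈log₂ d⌉ such that G_k is the spanning star centered at u_0 (its edges are exactly {u_0, v} for all v ≠ u_0), and every graph G_i in the sequence has at most 2n − 3 edges. This is realized by the TreeToStar algorithm, in which, in every round, each non-root node activates an edge with its grandparent and deactivates the edge with its parent. -/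
/-!
Choose for every vertex other than the root `r` a neighbor closer to `r`, and let `f` send each
such vertex to its chosen neighbor and `r` to itself. The edges `{v, f v}` form the tree, and
replacing each parent by the grandparent amounts to replacing `f` by `f ∘ f`. After `i` rounds the
parent map is therefore `f^[2 ^ i]`, which is constantly `r` as soon as `2 ^ i` is at least the
depth. Iterates of `f` still bring every vertex other than `r` closer to `r` and fix `r`, so each
intermediate graph is again a tree and has `n - 1` edges.
-/

open SimpleGraph

section FunctionalGraph

variable {V α : Type*} {f : V → V} {G : SimpleGraph V} {r u v : V}

/-- The functional graph of `f`: each vertex is joined to its image under `f`. Fixed points of `f`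
contribute no edge. When `f` is the parent map of a rooted tree, this is the tree itself. -/
def functionalGraph (f : V → V) : SimpleGraph V :=
  .fromRel fun u v => f u = v

lemma functionalGraph_adj : (functionalGraph f).Adj u v ↔ u ≠ v ∧ (f u = v ∨ f v = u) :=
  Iff.rfl

lemma functionalGraph_adj_map (hv : f v ≠ v) : (functionalGraph f).Adj v (f v) :=
  ⟨hv.symm, .inl rfl⟩

lemma functionalGraph_le_iff : functionalGraph f ≤ G ↔ ∀ v, f v ≠ v → G.Adj v (f v) := by
  refine ⟨fun hle v hv => hle (functionalGraph_adj_map hv), ?_⟩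
  rintro hadj u v ⟨hne, rfl | rfl⟩
  · exact hadj u hne.symm
  · exact (hadj v hne).symm

lemma functionalGraph_const (r : V) : functionalGraph (fun _ => r) = starGraph r := by
  ext u v
  rw [functionalGraph_adj, starGraph_adj, eq_comm (a := r), eq_comm (a := r), or_comm]

lemma isAcyclic_functionalGraph [Preorder α] {h : V → α} (hlt : ∀ v, f v ≠ v → h (f v) < h v) :
    (functionalGraph f).IsAcyclic := by
  classical
  intro a c hc
  -- Both neighbors on the cycle of a vertex `m` of maximal height would have to be `f m`.
  obtain ⟨m, hm, hmax⟩ := c.support.toFinset.exists_maximalFor h ⟨a, by simp⟩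
  rw [List.mem_toFinset] at hm
  have hrot := hc.rotate hm
  have eq_map_of_adj {w : V} (hw : w ∈ (c.rotate m hm).support)
      (hadj : (functionalGraph f).Adj m w) : w = f m := by
    rw [Walk.mem_support_rotate_iff] at hw
    obtain ⟨hne, heq | rfl⟩ := hadj
    · exact heq.symm
    · have hwm := hlt w hne
      exact absurd (hmax (List.mem_toFinset.mpr hw) hwm.le) hwm.not_ge
  have snd_eq : (c.rotate m hm).snd = f m :=
    eq_map_of_adj (Walk.getVert_mem_support ..) (Walk.adj_snd hrot.not_nil)
  have penultimate_eq : (c.rotate m hm).penultimate = f m :=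
    eq_map_of_adj (Walk.getVert_mem_support ..) (Walk.adj_penultimate hrot.not_nil).symm
  exact hrot.snd_ne_penultimate (snd_eq.trans penultimate_eq.symm)

lemma isTree_functionalGraph [Preorder α] [WellFoundedLT α] {h : V → α}
    (hlt : ∀ v, f v ≠ v → h (f v) < h v) (hfix : ∀ v, f v = v → v = r) :
    (functionalGraph f).IsTree := by
  have reachable_root (v : V) : (functionalGraph f).Reachable v r := by
    induction v using (InvImage.wf h wellFounded_lt).induction with
    | _ v ih =>
      by_cases hv : f v = v
      · rw [hfix v hv]
      · exact (functionalGraph_adj_map hv).reachable.trans (ih (f v) (hlt v hv))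
  have : Nonempty V := ⟨r⟩
  exact ⟨⟨fun u v => (reachable_root u).trans (reachable_root v).symm⟩,
    isAcyclic_functionalGraph hlt⟩

lemma exists_adj_adj_of_functionalGraph_iterate_two_adj
    (hadj : (functionalGraph f^[2]).Adj u v) (hnot : ¬ (functionalGraph f).Adj u v) :
    ∃ w, (functionalGraph f).Adj u w ∧ (functionalGraph f).Adj w v := by
  wlog huv : f^[2] u = v generalizing u v
  · obtain ⟨w, hvw, hwu⟩ := this hadj.symm (fun h => hnot h.symm) (hadj.2.resolve_left huv)
    exact ⟨w, hwu.symm, hvw.symm⟩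
  obtain rfl : f (f u) = v := huv
  have hu : f u ≠ u := fun h => hadj.1 (by simp [h])
  have hfu : f (f u) ≠ f u := fun h => hnot (h.symm ▸ functionalGraph_adj_map hu)
  exact ⟨f u, functionalGraph_adj_map hu, functionalGraph_adj_map hfu⟩

lemma activelyDynamic_functionalGraph_iterate_two_pow (f : V → V) (T : ℕ) :
    ActivelyDynamic (fun i => functionalGraph f^[2 ^ i]) T := by
  intro i _ u v hadj hnot
  simp only [pow_succ, Function.iterate_mul] at hadj
  exact exists_adj_adj_of_functionalGraph_iterate_two_adj hadj hnot

end FunctionalGraph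

section ParentMap

variable {V : Type*} {G : SimpleGraph V} {f : V → V} {r v : V} {k : ℕ}

lemma exists_adj_dist_eq_dist_sub_one (hrv : G.Reachable r v) (hne : v ≠ r) :
    ∃ w, G.Adj v w ∧ G.dist r w = G.dist r v - 1 := by
  obtain ⟨p, hp⟩ := hrv.exists_walk_length_eq_dist
  have hadj := p.adj_penultimate (p.not_nil_of_ne hne.symm)
  have hle : G.dist r p.penultimate ≤ G.dist r v - 1 := by
    simpa [hp] using dist_le p.dropLast
  have htri := hadj.reachable.dist_triangle_right r
  rw [dist_eq_one_iff_adj.mpr hadj] at htri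
  exact ⟨p.penultimate, hadj.symm, by omega⟩

/-- `f` sends every vertex other than `r` to a parent in `G` rooted at `r`, that is, to a neighbor
one step closer to `r`. At `r` the subtraction truncates, so in a connected graph `f` fixes `r`. -/
structure IsParentMap (G : SimpleGraph V) (r : V) (f : V → V) : Prop where
  adj : ∀ v, v ≠ r → G.Adj v (f v)
  dist_map : ∀ v, G.dist r (f v) = G.dist r v - 1

lemma exists_isParentMap (hG : G.Connected) (r : V) : ∃ f, IsParentMap G r f := by
  have exists_parent (v : V) : ∃ w, (v ≠ r → G.Adj v w) ∧ G.dist r w = G.dist r v - 1 := by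
    by_cases hv : v = r
    · exact ⟨r, fun hne => absurd hv hne, by simp [hv]⟩
    · obtain ⟨w, hadj, hdist⟩ := exists_adj_dist_eq_dist_sub_one (hG.preconnected r v) hv
      exact ⟨w, fun _ => hadj, hdist⟩
  choose f hadj hdist using exists_parent
  exact ⟨f, hadj, hdist⟩

namespace IsParentMap

lemma dist_iterate (hf : IsParentMap G r f) (k : ℕ) (v : V) :
    G.dist r (f^[k] v) = G.dist r v - k := by
  have hsemi : Function.Semiconj (G.dist r) f Nat.pred := hf.dist_map
  rw [hsemi.iterate_right k v, Nat.pred_iterate]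

lemma iterate_eq_root (hf : IsParentMap G r f) (hG : G.Connected) (hv : G.dist r v ≤ k) :
    f^[k] v = r := by
  rw [eq_comm, ← hG.dist_eq_zero_iff, hf.dist_iterate, Nat.sub_eq_zero_of_le hv]

lemma eq_root_of_iterate_eq (hf : IsParentMap G r f) (hG : G.Connected) (hk : k ≠ 0)
    (hv : f^[k] v = v) : v = r := by
  have hdist := hf.dist_iterate k v
  rw [hv] at hdist
  exact (hG.dist_eq_zero_iff.mp (by omega)).symm

lemma dist_iterate_lt (hf : IsParentMap G r f) (hG : G.Connected) (hv : f^[k] v ≠ v) :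
    G.dist r (f^[k] v) < G.dist r v := by
  have hk : k ≠ 0 := by
    rintro rfl
    exact hv rfl
  have hpos : G.dist r v ≠ 0 := by
    intro h
    obtain rfl := hG.dist_eq_zero_iff.mp h
    exact hv (hf.iterate_eq_root hG (by simp))
  rw [hf.dist_iterate]
  omega

lemma isTree_functionalGraph_iterate (hf : IsParentMap G r f) (hG : G.Connected) (hk : k ≠ 0) :
    (functionalGraph f^[k]).IsTree :=
  isTree_functionalGraph (fun _ => hf.dist_iterate_lt hG) fun _ => hf.eq_root_of_iterate_eq hG hk

lemma functionalGraph_le (hf : IsParentMap G r f) (hG : G.Connected) : functionalGraph f ≤ G := by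
  refine functionalGraph_le_iff.mpr fun v hv => hf.adj v ?_
  rintro rfl
  exact hv (hf.iterate_eq_root (k := 1) hG (by simp))

lemma functionalGraph_eq (hf : IsParentMap G r f) (hG : G.IsTree) : functionalGraph f = G :=
  have hconn := (hf.isTree_functionalGraph_iterate (k := 1) hG.connected one_ne_zero).connected
  (isTree_iff_minimal_connected.mp hG).eq_of_le hconn (hf.functionalGraph_le hG.connected)

lemma functionalGraph_iterate_eq_starGraph (hf : IsParentMap G r f) (hG : G.Connected)
    (hk : ∀ v, G.dist r v ≤ k) : functionalGraph f^[k] = starGraph r := by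
  rw [← functionalGraph_const]
  exact congrArg functionalGraph (funext fun v => hf.iterate_eq_root hG (hk v))

end IsParentMap

end ParentMap

theorem treeToStar_general {V : Type*} {G : SimpleGraph V} (hG : G.IsTree) {r : V} {d : ℕ}
    (hdepth : ∀ v : V, G.dist r v ≤ d) :
    ∃ Gs : ℕ → SimpleGraph V,
      Gs 0 = G ∧ ActivelyDynamic Gs (Nat.clog 2 d) ∧
      Gs (Nat.clog 2 d) = starGraph r ∧ ∀ i, (Gs i).IsTree := by
  obtain ⟨f, hf⟩ := exists_isParentMap hG.connected r
  refine ⟨fun i => functionalGraph f^[2 ^ i], hf.functionalGraph_eq hG,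
    activelyDynamic_functionalGraph_iterate_two_pow f _, ?_, fun i => ?_⟩
  · exact hf.functionalGraph_iterate_eq_starGraph hG.connected fun v =>
      (hdepth v).trans (Nat.le_pow_clog one_lt_two d)
  · exact hf.isTree_functionalGraph_iterate hG.connected (Nat.two_pow_pos i).ne'

/-- TreeToStar: any tree on `n ≥ 2` vertices rooted at `u₀` of depth `d ≥ 1` can be
transformed by an actively dynamic sequence of length `⌈log₂ d⌉` into the spanning star
centered at `u₀`, with every intermediate graph having at most `2n - 3` edges. -/
theorem treeToStar {V : Type*} [Fintype V] (hn : 2 ≤ Fintype.card V)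
    (G : SimpleGraph V) (hG : G.IsTree) (u0 : V) (d : ℕ) (hd : 1 ≤ d)
    (hdepth : ∀ v : V, G.dist u0 v ≤ d) :
    ∃ Gs : ℕ → SimpleGraph V,
      Gs 0 = G ∧ ActivelyDynamic Gs (Nat.clog 2 d) ∧
      (∀ u v : V, (Gs (Nat.clog 2 d)).Adj u v ↔ u ≠ v ∧ (u = u0 ∨ v = u0)) ∧
      (∀ i ≤ Nat.clog 2 d, (Gs i).edgeSet.ncard ≤ 2 * Fintype.card V - 3) := by
  obtain ⟨Gs, hzero, hdyn, hstar, htree⟩ := treeToStar_general hG hdepth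
  refine ⟨Gs, hzero, hdyn, fun u v => hstar ▸ starGraph_adj, fun i _ => ?_⟩
  have hcard := (isTree_iff_connected_and_card.mp (htree i)).2
  rw [Nat.card_coe_set_eq, Nat.card_eq_fintype_card] at hcard
  omega
end
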